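/- arXiv:1907.04384 — 13 statements merged into one kernel-verified Lean document; each statement's English description precedes it below -/
import Mathlib

section
/- Let D be an integral domain that is not a field. Suppose that (1) every nonzero nonunit of D is contained in some homogeneous ideal of D, and (2) whenever a maximal ideal M of D is contained in the union of a family (M_α) of maximal ideals of D, then M = M_α for some α. Then D is potent, i.e., every maximal ideal of D contains a homogeneous ideal. -/
/-- A (d-)homogeneous ideal: a nonzero proper finitely generated ideal contained in
exactly one maximal ideal. -/
def IsHomogIdeal {D : Type*} [CommRing D] (I : Ideal D) : Prop :=
  I ≠ ⊥ ∧ I ≠ ⊤ ∧ I.FG ∧ ∃! M : Ideal D, M.IsMaximal ∧ I ≤ M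

theorem stmt_0 {D : Type*} [CommRing D] [IsDomain D] (hnf : ¬ IsField D)
    (h1 : ∀ x : D, x ≠ 0 → ¬ IsUnit x → ∃ I : Ideal D, IsHomogIdeal I ∧ x ∈ I)
    (h2 : ∀ M : Ideal D, M.IsMaximal → ∀ S : Set (Ideal D),
      (∀ N ∈ S, N.IsMaximal) → (M : Set D) ⊆ ⋃ N ∈ S, (N : Set D) → M ∈ S) :
    ∀ M : Ideal D, M.IsMaximal → ∃ I : Ideal D, IsHomogIdeal I ∧ I ≤ M := by
  intro M hM
  refine h2 M hM {N | N.IsMaximal ∧ ∃ I : Ideal D, IsHomogIdeal I ∧ I ≤ N}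
    (fun N hN => hN.1) ?_ |>.2
  have key : ∀ x ∈ M, x ≠ 0 → ∃ N : Ideal D,
      (N.IsMaximal ∧ ∃ I : Ideal D, IsHomogIdeal I ∧ I ≤ N) ∧ x ∈ N := by
    intro x hx hx0
    obtain ⟨I, hI, hxI⟩ := h1 x hx0
      (fun hu => hM.ne_top (Ideal.eq_top_of_isUnit_mem M hx hu))
    obtain ⟨N, ⟨hN, hIN⟩, -⟩ := hI.2.2.2
    exact ⟨N, ⟨hN, I, hI, hIN⟩, hIN hxI⟩
  have hMb : M ≠ ⊥ := Ring.ne_bot_of_isMaximal_of_not_isField hM hnf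
  intro x hx
  simp only [Set.mem_iUnion]
  by_cases hx0 : x = 0
  · obtain ⟨y, hy, hy0⟩ := Submodule.exists_mem_ne_zero_of_ne_bot hMb
    obtain ⟨N, hN, -⟩ := key y hy hy0
    exact ⟨N, hN, by rw [hx0]; exact N.zero_mem⟩
  · obtain ⟨N, hN, hxN⟩ := key x hx hx0
    exact ⟨N, hN, hxN⟩
end

section
/- Let D be an integral domain. If D is potent (every maximal ideal of D contains a homogeneous ideal), then every nonzero nonunit x of D is contained in some homogeneous ideal of D; indeed, if I is a homogeneous ideal contained in a maximal ideal containing x, then (I + xD) is a homogeneous ideal containing x. -/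
theorem stmt_1 {D : Type*} [CommRing D] [IsDomain D]
    (hpot : ∀ M : Ideal D, M.IsMaximal → ∃ I : Ideal D, IsHomogIdeal I ∧ I ≤ M) :
    (∀ x : D, x ≠ 0 → ¬ IsUnit x → ∃ J : Ideal D, IsHomogIdeal J ∧ x ∈ J) ∧
    (∀ x : D, x ≠ 0 → ¬ IsUnit x → ∀ M : Ideal D, M.IsMaximal → x ∈ M →
      ∀ I : Ideal D, IsHomogIdeal I → I ≤ M →
        IsHomogIdeal (I + Ideal.span {x}) ∧ x ∈ I + Ideal.span {x}) := by
  have key : ∀ x : D, ∀ M : Ideal D, M.IsMaximal → x ∈ M →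
      ∀ I : Ideal D, IsHomogIdeal I → I ≤ M →
        IsHomogIdeal (I + Ideal.span {x}) ∧ x ∈ I + Ideal.span {x} := by
    intro x M hM hxM I hI hIM
    obtain ⟨h0, h1, hfg, N, hN, huniq⟩ := hI
    have hx : x ∈ I + Ideal.span {x} :=
      (le_sup_right : Ideal.span {x} ≤ I ⊔ Ideal.span {x}) (Ideal.mem_span_singleton_self x)
    have hle : I ≤ I + Ideal.span {x} := (le_sup_left : I ≤ I ⊔ Ideal.span {x})
    have hleM : I + Ideal.span {x} ≤ M :=
      sup_le hIM ((Ideal.span_singleton_le_iff_mem M).2 hxM)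
    refine ⟨⟨?_, ?_, ?_, M, ⟨hM, hleM⟩, ?_⟩, hx⟩
    · intro h
      exact h0 (le_bot_iff.1 (h ▸ hle))
    · intro h
      exact hM.ne_top (top_le_iff.1 (h ▸ hleM))
    · exact Submodule.FG.sup hfg (Submodule.fg_span_singleton x)
    · rintro P ⟨hP, hPle⟩
      rw [huniq P ⟨hP, hle.trans hPle⟩, huniq M ⟨hM, hIM⟩]
  refine ⟨?_, fun x _ _ => key x⟩
  intro x _ hu
  obtain ⟨M, hM, hxM⟩ := exists_max_ideal_of_mem_nonunits hu
  obtain ⟨I, hI, hIM⟩ := hpot M hM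
  exact ⟨_, key x M hM hxM I hI hIM⟩
end

section
/- Let D be an integral domain that is not a field and which has finite character, i.e., every nonzero nonunit of D is contained in at most finitely many maximal ideals of D. Then D is potent: every maximal ideal of D contains a homogeneous ideal. -/
theorem stmt_2 {D : Type*} [CommRing D] [IsDomain D] (hnf : ¬ IsField D)
    (hfc : ∀ x : D, x ≠ 0 → ¬ IsUnit x → {M : Ideal D | M.IsMaximal ∧ x ∈ M}.Finite) :
    ∀ M : Ideal D, M.IsMaximal → ∃ I : Ideal D, IsHomogIdeal I ∧ I ≤ M := by
  intro M hM
  have hbot : M ≠ ⊥ := Ring.ne_bot_of_isMaximal_of_not_isField hM hnf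
  obtain ⟨x, hxM, hx0⟩ := Submodule.exists_mem_ne_zero_of_ne_bot hbot
  have hxu : ¬ IsUnit x := fun hu => hM.ne_top (Ideal.eq_top_of_isUnit_mem M hxM hu)
  have hfin := hfc x hx0 hxu
  have hy : ∀ N : Ideal D, ∃ y ∈ M, N.IsMaximal → N ≠ M → y ∉ N := by
    intro N
    by_cases h : M ≤ N
    · refine ⟨0, M.zero_mem, fun hN hne => ?_⟩
      exact absurd (hM.eq_of_le hN.ne_top h).symm hne
    · obtain ⟨y, hyM, hyN⟩ := Set.not_subset.mp h
      exact ⟨y, hyM, fun _ _ => hyN⟩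
  choose y hyM hyN using hy
  have hle : Ideal.span (insert x (y '' {N : Ideal D | N.IsMaximal ∧ x ∈ N})) ≤ M := by
    rw [Ideal.span_le]
    rintro z (rfl | ⟨N, _, rfl⟩)
    · exact hxM
    · exact hyM N
  refine ⟨_, ⟨?_, ?_, ?_, M, ⟨hM, hle⟩, ?_⟩, hle⟩
  · intro h
    exact hx0 (Ideal.span_eq_bot.mp h x (Set.mem_insert _ _))
  · intro h
    exact hM.ne_top (top_le_iff.mp (h ▸ hle))
  · exact Submodule.fg_span ((hfin.image y).insert x)
  · rintro N ⟨hN, hIN⟩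
    by_contra hne
    have hxN : x ∈ N := hIN (Ideal.subset_span (Set.mem_insert _ _))
    exact hyN N hN hne (hIN (Ideal.subset_span (Set.mem_insert_of_mem _ ⟨N, ⟨hN, hxN⟩, rfl⟩)))
end

section
/- Let D be an integral domain and let I be a nonzero proper finitely generated ideal of D. Then I is homogeneous (contained in exactly one maximal ideal) if and only if for every pair X, Y of proper finitely generated ideals of D with I ⊆ X and I ⊆ Y, the ideal X + Y is proper (X + Y ≠ D). -/
theorem stmt_3 {D : Type*} [CommRing D] [IsDomain D] (I : Ideal D)
    (hI0 : I ≠ ⊥) (hIt : I ≠ ⊤) (hIfg : I.FG) :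
    IsHomogIdeal I ↔
      ∀ X Y : Ideal D, X ≠ ⊤ → X.FG → Y ≠ ⊤ → Y.FG → I ≤ X → I ≤ Y → X + Y ≠ ⊤ := by
  constructor
  · rintro ⟨-, -, -, M, -, hu⟩ X Y hX - hY - hIX hIY hXY
    obtain ⟨P, hP, hXP⟩ := Ideal.exists_le_maximal X hX
    obtain ⟨Q, hQ, hYQ⟩ := Ideal.exists_le_maximal Y hY
    have h1 : P = M := hu P ⟨hP, hIX.trans hXP⟩
    have h2 : Q = M := hu Q ⟨hQ, hIY.trans hYQ⟩
    subst h1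
    subst h2
    apply hP.ne_top
    rw [eq_top_iff, ← hXY]
    exact sup_le hXP hYQ
  · intro h
    refine ⟨hI0, hIt, hIfg, ?_⟩
    obtain ⟨M, hM, hIM⟩ := Ideal.exists_le_maximal I hIt
    refine ⟨M, ⟨hM, hIM⟩, ?_⟩
    rintro N ⟨hN, hIN⟩
    by_contra hne
    have hcop : N ⊔ M = ⊤ := hN.coprime_of_ne hM hne
    have h1 : (1 : D) ∈ N ⊔ M := hcop ▸ Submodule.mem_top
    obtain ⟨a, ha, b, hb, hab⟩ := Submodule.mem_sup.mp h1
    have hX : I ⊔ Ideal.span {a} ≤ N :=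
      sup_le hIN ((Ideal.span_singleton_le_iff_mem N).mpr ha)
    have hY : I ⊔ Ideal.span {b} ≤ M :=
      sup_le hIM ((Ideal.span_singleton_le_iff_mem M).mpr hb)
    refine h (I ⊔ Ideal.span {a}) (I ⊔ Ideal.span {b})
      (fun e => hN.ne_top (top_le_iff.mp (e ▸ hX)))
      (Submodule.FG.sup hIfg (Submodule.fg_span_singleton a))
      (fun e => hM.ne_top (top_le_iff.mp (e ▸ hY)))
      (Submodule.FG.sup hIfg (Submodule.fg_span_singleton b)) le_sup_left le_sup_left ?_
    rw [Ideal.eq_top_iff_one, ← hab]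
    exact Submodule.add_mem_sup
      (Submodule.mem_sup_right (Ideal.mem_span_singleton_self a))
      (Submodule.mem_sup_right (Ideal.mem_span_singleton_self b))
end

section
/- Let D be an integral domain. Then D has finite character (every nonzero nonunit of D lies in at most finitely many maximal ideals) if and only if every nonzero proper finitely generated ideal of D is contained in at most finitely many mutually comaximal proper finitely generated ideals; that is, if and only if for every nonzero proper finitely generated ideal A of D, every set of pairwise comaximal proper finitely generated ideals, each containing A, is finite. -/
theorem stmt_4 {D : Type*} [CommRing D] [IsDomain D] :
    (∀ x : D, x ≠ 0 → ¬ IsUnit x → {M : Ideal D | M.IsMaximal ∧ x ∈ M}.Finite) ↔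
    (∀ A : Ideal D, A ≠ ⊥ → A ≠ ⊤ → A.FG →
      ∀ S : Set (Ideal D),
        (∀ I ∈ S, I ≠ ⊤ ∧ I.FG ∧ A ≤ I) →
        (∀ I ∈ S, ∀ J ∈ S, I ≠ J → I + J = ⊤) → S.Finite) := by
  constructor
  · intro h A hA0 hA1 _ S hS hc
    obtain ⟨x, hxA, hx0⟩ := Submodule.exists_mem_ne_zero_of_ne_bot hA0
    have hxu : ¬ IsUnit x := fun hu => hA1 (Ideal.eq_top_of_isUnit_mem _ hxA hu)
    have hf := h x hx0 hxu
    have hM : ∀ I : Ideal D, ∃ M : Ideal D, I ∈ S → M.IsMaximal ∧ I ≤ M := by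
      intro I
      by_cases hI : I ∈ S
      · obtain ⟨M, h1, h2⟩ := Ideal.exists_le_maximal I (hS I hI).1
        exact ⟨M, fun _ => ⟨h1, h2⟩⟩
      · exact ⟨⊤, fun h => absurd h hI⟩
    choose f hf' using hM
    refine Set.Finite.of_injOn (f := f) ?_ ?_ hf
    · intro I hI
      exact ⟨(hf' I hI).1, (hf' I hI).2 ((hS I hI).2.2 hxA)⟩
    · intro I hI J hJ hIJ
      by_contra hne
      have h1 := hc I hI J hJ hne
      apply (hf' I hI).1.ne_top
      rw [eq_top_iff, ← h1]
      exact sup_le (hf' I hI).2 (hIJ ▸ (hf' J hJ).2)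
  · intro h x hx0 hxu
    set A : Ideal D := Ideal.span {x} with hA
    have hAfg : A.FG := ⟨{x}, by simp [hA]⟩
    have hfin := h A (by simpa [hA] using hx0) (by simpa [hA, Ideal.span_singleton_eq_top] using hxu) hAfg
    -- every finitely generated proper ideal lies in a homogeneous one
    have key : ∀ I0 : Ideal D, I0.FG → I0 ≠ ⊤ → A ≤ I0 →
        ∃ H : Ideal D, H.FG ∧ I0 ≤ H ∧ ∃ M : Ideal D, M.IsMaximal ∧ H ≤ M ∧
          ∀ N : Ideal D, N.IsMaximal → H ≤ N → N = M := by
      intro I0 hfg hne hAI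
      by_contra hcon
      have split : ∀ I : {I : Ideal D // I.FG ∧ I ≠ ⊤ ∧ I0 ≤ I},
          ∃ J K : {I : Ideal D // I.FG ∧ I ≠ ⊤ ∧ I0 ≤ I},
            I.1 ≤ J.1 ∧ I.1 ≤ K.1 ∧ J.1 ⊔ K.1 = ⊤ := by
        rintro ⟨I, hI1, hI2, hI3⟩
        obtain ⟨M, hM, hIM⟩ := Ideal.exists_le_maximal I hI2
        have : ∃ N : Ideal D, N.IsMaximal ∧ I ≤ N ∧ N ≠ M := by
          by_contra hno
          push Not at hno
          exact hcon ⟨I, hI1, hI3, M, hM, hIM, hno⟩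
        obtain ⟨N, hN, hIN, hNM⟩ := this
        have hsup : N ⊔ M = ⊤ := hN.coprime_of_ne hM hNM
        obtain ⟨a, ha, b, hb, hab⟩ := Submodule.mem_sup.1 ((Ideal.eq_top_iff_one _).1 hsup)
        have mk : ∀ (P : Ideal D) (c : D), P.IsMaximal → I ≤ P → c ∈ P →
            (I ⊔ Ideal.span {c}).FG ∧ I ⊔ Ideal.span {c} ≠ ⊤ ∧ I0 ≤ I ⊔ Ideal.span {c} := by
          intro P c hP hIP hc
          refine ⟨Submodule.FG.sup hI1 ⟨{c}, by simp⟩, ?_, hI3.trans le_sup_left⟩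
          intro ht
          apply hP.ne_top
          rw [eq_top_iff, ← ht]
          exact sup_le hIP ((Ideal.span_singleton_le_iff_mem _).2 hc)
        refine ⟨⟨_, mk N a hN hIN ha⟩, ⟨_, mk M b hM hIM hb⟩, le_sup_left, le_sup_left, ?_⟩
        rw [Ideal.eq_top_iff_one, ← hab]
        exact add_mem
          (Ideal.mem_sup_left (Ideal.mem_sup_right (Ideal.mem_span_singleton_self a)))
          (Ideal.mem_sup_right (Ideal.mem_sup_right (Ideal.mem_span_singleton_self b)))
      choose J K hJ hK hJK using split
      let s : ℕ → {I : Ideal D // I.FG ∧ I ≠ ⊤ ∧ I0 ≤ I} :=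
        fun n => Nat.rec ⟨I0, hfg, hne, le_rfl⟩ (fun _ I => K I) n
      have hs : ∀ n, s (n + 1) = K (s n) := fun n => rfl
      have hmono : Monotone fun n => (s n).1 :=
        monotone_nat_of_le_succ fun n => by rw [hs]; exact hK _
      have hlt : ∀ m n, m < n → (J (s m)).1 ⊔ (J (s n)).1 = ⊤ := by
        intro m n hmn
        have h1 : (K (s m)).1 ≤ (J (s n)).1 := by
          rw [← hs]
          exact (hmono (Nat.succ_le_of_lt hmn)).trans (hJ _)
        exact top_le_iff.1 ((hJK (s m)).ge.trans (sup_le_sup_left h1 _))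
      have hne' : ∀ m n, m ≠ n → (J (s m)).1 ⊔ (J (s n)).1 = ⊤ := by
        intro m n hmn
        rcases lt_or_gt_of_ne hmn with h1 | h1
        · exact hlt m n h1
        · rw [sup_comm]; exact hlt n m h1
      have hinj : Function.Injective fun n => (J (s n)).1 := by
        intro m n hmn
        by_contra hc
        have h1 := hne' m n hc
        simp only at hmn
        rw [hmn, sup_idem] at h1
        exact (J (s n)).2.2.1 h1
      refine Set.infinite_range_of_injective hinj (hfin _ ?_ ?_)
      · rintro _ ⟨n, rfl⟩
        exact ⟨(J (s n)).2.2.1, (J (s n)).2.1, hAI.trans (J (s n)).2.2.2⟩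
      · rintro _ ⟨m, rfl⟩ _ ⟨n, rfl⟩ hmn
        exact hne' m n fun hh => hmn (by rw [hh])
    -- the set of maximal ideals carrying a homogeneous ideal above `A` is finite
    let P : Set (Ideal D) := {M | M.IsMaximal ∧ ∃ H : Ideal D, H.FG ∧ A ≤ H ∧ H ≤ M ∧
      ∀ N : Ideal D, N.IsMaximal → H ≤ N → N = M}
    have hP : P.Finite := by
      have hch : ∀ M : P, ∃ H : Ideal D, H.FG ∧ A ≤ H ∧ H ≤ M.1 ∧
        ∀ N : Ideal D, N.IsMaximal → H ≤ N → N = M.1 := fun M => M.2.2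
      choose H h1 h2 h3 h4 using hch
      have hinj : Function.Injective H := by
        intro M N hMN
        exact Subtype.ext (h4 N M.1 M.2.1 (hMN ▸ h3 M))
      have hr : (Set.range H).Finite := by
        apply hfin
        · rintro _ ⟨M, rfl⟩
          exact ⟨fun ht => M.2.1.ne_top (top_le_iff.1 (ht ▸ h3 M)), h1 M, h2 M⟩
        · rintro _ ⟨M, rfl⟩ _ ⟨N, rfl⟩ hMN
          by_contra hc
          obtain ⟨Q, hQ, hle⟩ := Ideal.exists_le_maximal _ hc
          have e1 := h4 M Q hQ (le_sup_left.trans hle)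
          have e2 := h4 N Q hQ (le_sup_right.trans hle)
          exact hMN (congrArg H (Subtype.ext (e1.symm.trans e2)))
      have : Finite P := by
        have := hr.to_subtype
        exact Finite.of_injective_finite_range hinj
      exact Set.toFinite P
    refine hP.subset ?_
    rintro M ⟨hM, hxM⟩
    have hcov : (M : Set D) ⊆ ⋃ N ∈ (hP.toFinset : Set (Ideal D)), (N : Set D) := by
      intro y hy
      have hle : A ⊔ Ideal.span {y} ≤ M :=
        sup_le ((Ideal.span_singleton_le_iff_mem _).2 hxM)
          ((Ideal.span_singleton_le_iff_mem _).2 hy)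
      obtain ⟨H, g1, g2, N, g3, g4, g5⟩ := key (A ⊔ Ideal.span {y})
        (Submodule.FG.sup hAfg ⟨{y}, by simp⟩)
        (fun ht => hM.ne_top (top_le_iff.1 (ht ▸ hle))) le_sup_left
      have hN : N ∈ P := ⟨g3, H, g1, le_sup_left.trans g2, g4, g5⟩
      simp only [Set.mem_iUnion]
      exact ⟨N, by simpa using hN,
        g4 (g2 (Ideal.mem_sup_right (Ideal.mem_span_singleton_self y)))⟩
    obtain ⟨N, hN, hMN⟩ := (Ideal.subset_union_prime (s := hP.toFinset) (f := fun N => N) ⊤ ⊤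
      (fun N hN _ _ => ((hP.mem_toFinset.1 hN).1).isPrime)).1 hcov
    have hN' := hP.mem_toFinset.1 hN
    rw [hM.eq_of_le hN'.1.ne_top hMN]
    exact hN'
end

section
/- Let D be an integral domain and let A be a nonzero proper finitely generated ideal of D such that every set of pairwise comaximal proper finitely generated ideals, each containing A, is finite. Then A is contained in at least one homogeneous ideal of D (a nonzero proper finitely generated ideal lying in exactly one maximal ideal). -/
theorem stmt_5 {D : Type*} [CommRing D] [IsDomain D] (A : Ideal D)
    (hA0 : A ≠ ⊥) (hAt : A ≠ ⊤) (hAfg : A.FG)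
    (hfin : ∀ S : Set (Ideal D),
      (∀ I ∈ S, I ≠ ⊤ ∧ I.FG ∧ A ≤ I) →
      (∀ I ∈ S, ∀ J ∈ S, I ≠ J → I + J = ⊤) → S.Finite) :
    ∃ J : Ideal D, IsHomogIdeal J ∧ A ≤ J := by
  by_contra hno
  have key : ∀ p : {I : Ideal D // I ≠ ⊤ ∧ I.FG ∧ A ≤ I},
      ∃ q r : {I : Ideal D // I ≠ ⊤ ∧ I.FG ∧ A ≤ I},
        p.1 ≤ q.1 ∧ p.1 ≤ r.1 ∧ q.1 ⊔ r.1 = ⊤ := by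
    rintro ⟨I, hI, hfg, hAI⟩
    obtain ⟨M, hM, hIM⟩ := Ideal.exists_le_maximal I hI
    have hN : ∃ N : Ideal D, N.IsMaximal ∧ I ≤ N ∧ N ≠ M := by
      by_contra hcon
      push Not at hcon
      exact hno ⟨I, ⟨fun h => hA0 (le_bot_iff.mp (h ▸ hAI)), hI, hfg, M, ⟨hM, hIM⟩,
        fun N hN => hcon N hN.1 hN.2⟩, hAI⟩
    obtain ⟨N, hN, hIN, hne⟩ := hN
    have hMN : M ⊔ N = ⊤ := hM.coprime_of_ne hN hne.symm
    have h1 : (1 : D) ∈ M ⊔ N := hMN ▸ Submodule.mem_top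
    obtain ⟨x, hx, y, hy, hxy⟩ := Submodule.mem_sup.mp h1
    have hxM : I ⊔ Ideal.span {x} ≤ M :=
      sup_le hIM ((Ideal.span_singleton_le_iff_mem M).mpr hx)
    have hyN : I ⊔ Ideal.span {y} ≤ N :=
      sup_le hIN ((Ideal.span_singleton_le_iff_mem N).mpr hy)
    refine ⟨⟨I ⊔ Ideal.span {x}, fun h => hM.ne_top (top_le_iff.mp (h ▸ hxM)),
        Submodule.FG.sup hfg (Submodule.fg_span_singleton x), hAI.trans le_sup_left⟩,
      ⟨I ⊔ Ideal.span {y}, fun h => hN.ne_top (top_le_iff.mp (h ▸ hyN)),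
        Submodule.FG.sup hfg (Submodule.fg_span_singleton y), hAI.trans le_sup_left⟩,
      le_sup_left, le_sup_left, ?_⟩
    rw [Ideal.eq_top_iff_one, ← hxy]
    exact Ideal.add_mem _
      (Ideal.mem_sup_left (Ideal.mem_sup_right (Ideal.mem_span_singleton_self x)))
      (Ideal.mem_sup_right (Ideal.mem_sup_right (Ideal.mem_span_singleton_self y)))
  choose q r hq hr hqr using key
  let f : ℕ → {I : Ideal D // I ≠ ⊤ ∧ I.FG ∧ A ≤ I} := fun n =>
    Nat.rec ⟨A, hAt, hAfg, le_rfl⟩ (fun _ p => q p) n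
  have hmono : Monotone fun n => (f n).1 := monotone_nat_of_le_succ fun n => hq (f n)
  let g : ℕ → Ideal D := fun n => (r (f n)).1
  have hlt : ∀ m n, m < n → g m ⊔ g n = ⊤ := by
    intro m n hmn
    have h1 : (q (f m)).1 ≤ g n := (hmono (Nat.succ_le_of_lt hmn)).trans (hr (f n))
    rw [← top_le_iff, ← hqr (f m)]
    exact sup_le (h1.trans le_sup_right) le_sup_left
  have hne : ∀ m n, m ≠ n → g m ⊔ g n = ⊤ := by
    intro m n hmn
    rcases lt_or_gt_of_ne hmn with h | h
    · exact hlt m n h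
    · rw [sup_comm]; exact hlt n m h
  have hinj : Function.Injective g := by
    intro m n hmn
    by_contra h
    have h2 := hne m n h
    rw [hmn, sup_idem] at h2
    exact (r (f n)).2.1 h2
  refine Set.infinite_range_of_injective hinj (hfin _ ?_ ?_)
  · rintro _ ⟨n, rfl⟩
    exact (r (f n)).2
  · rintro _ ⟨m, rfl⟩ _ ⟨n, rfl⟩ h
    exact hne m n fun e => h (e ▸ rfl)
end

section
/- Let D be an integral domain and let Γ be a set of nonzero proper finitely generated ideals of D such that every nonzero proper finitely generated ideal of D is contained in some member of Γ. Then D has finite character (every nonzero nonunit lies in at most finitely many maximal ideals) if and only if every nonzero proper finitely generated ideal I of D is contained in at least one member of Γ and every set of pairwise comaximal members of Γ, each containing I, is finite. -/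
theorem aux_finite {D : Type*} [CommRing D] (Γ : Set (Ideal D))
    (hΓ : ∀ J ∈ Γ, J ≠ ⊤)
    (I : Ideal D) (h0 : I ≠ ⊥)
    (hcov : ∀ I : Ideal D, I ≠ ⊥ → I ≠ ⊤ → I.FG → ∃ J ∈ Γ, I ≤ J)
    (hS : ∀ S : Set (Ideal D), S ⊆ Γ → (∀ J ∈ S, I ≤ J) →
        (∀ J ∈ S, ∀ K ∈ S, J ≠ K → J + K = ⊤) → S.Finite)
    {ι : Type*} (f : ι → Ideal D) (hf : ∀ i, (f i).FG ∧ f i ≠ ⊤ ∧ I ≤ f i)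
    (hc : ∀ i j, i ≠ j → f i ⊔ f j = ⊤) : Finite ι := by
  have h1 : ∀ i, ∃ J ∈ Γ, f i ≤ J := fun i =>
    hcov _ (fun h => h0 (le_bot_iff.1 (h ▸ (hf i).2.2))) (hf i).2.1 (hf i).1
  choose g hg hfg using h1
  have hc' : ∀ i j, i ≠ j → g i ⊔ g j = ⊤ := fun i j h =>
    top_le_iff.1 ((hc i j h).symm.le.trans (sup_le_sup (hfg i) (hfg j)))
  have hinj : Function.Injective g := by
    intro i j h
    by_contra hne
    have := hc' i j hne
    rw [h, sup_idem] at this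
    exact hΓ _ (hg j) this
  have := hS (Set.range g) (by rintro _ ⟨i, rfl⟩; exact hg i)
    (by rintro _ ⟨i, rfl⟩; exact (hf i).2.2.trans (hfg i))
    (by
      rintro _ ⟨i, rfl⟩ _ ⟨j, rfl⟩ h
      exact hc' i j (fun e => h (e ▸ rfl)))
  have := this.to_subtype
  exact Finite.of_injective_finite_range hinj

theorem aux_seq {D : Type*} [CommRing D] (I : Ideal D) (hI : I.FG) (hI' : I ≠ ⊤)
    (h : ∀ J : Ideal D, J.FG → J ≠ ⊤ → I ≤ J →
      ∃ M N : Ideal D, M.IsMaximal ∧ N.IsMaximal ∧ J ≤ M ∧ J ≤ N ∧ M ≠ N) :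
    ∃ f : ℕ → Ideal D, (∀ i, (f i).FG ∧ f i ≠ ⊤ ∧ I ≤ f i) ∧
      ∀ i j, i ≠ j → f i ⊔ f j = ⊤ := by
  let P := {J : Ideal D // J.FG ∧ J ≠ ⊤ ∧ I ≤ J}
  have key : ∀ J : P, ∃ A B : P, J.1 ≤ A.1 ∧ J.1 ≤ B.1 ∧ A.1 ⊔ B.1 = ⊤ := by
    rintro ⟨J, hJ, hJt, hIJ⟩
    obtain ⟨M, N, hM, hN, hJM, hJN, hne⟩ := h J hJ hJt hIJ
    have ht := hM.coprime_of_ne hN hne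
    have h1 : (1 : D) ∈ M ⊔ N := by rw [ht]; trivial
    obtain ⟨m, hm, n, hn, hmn⟩ := Submodule.mem_sup.1 h1
    have hA : J ⊔ Ideal.span {m} ≤ M :=
      sup_le hJM ((Ideal.span_singleton_le_iff_mem _).2 hm)
    have hB : J ⊔ Ideal.span {n} ≤ N :=
      sup_le hJN ((Ideal.span_singleton_le_iff_mem _).2 hn)
    refine ⟨⟨J ⊔ Ideal.span {m}, Submodule.FG.sup hJ (Submodule.fg_span_singleton m),
        fun e => hM.ne_top (top_le_iff.1 (e ▸ hA)), hIJ.trans le_sup_left⟩,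
      ⟨J ⊔ Ideal.span {n}, Submodule.FG.sup hJ (Submodule.fg_span_singleton n),
        fun e => hN.ne_top (top_le_iff.1 (e ▸ hB)), hIJ.trans le_sup_left⟩,
      le_sup_left, le_sup_left, ?_⟩
    rw [Ideal.eq_top_iff_one, ← hmn]
    exact Submodule.add_mem_sup
      (Ideal.mem_sup_right (Ideal.mem_span_singleton_self m))
      (Ideal.mem_sup_right (Ideal.mem_span_singleton_self n))
  choose a b ha hb hab using key
  let B : ℕ → P := fun n => b^[n] ⟨I, hI, hI', le_rfl⟩
  have hBs : ∀ n, B (n + 1) = b (B n) := fun n => Function.iterate_succ_apply' b n _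
  have hmono : Monotone (fun n => (B n).1) := by
    apply monotone_nat_of_le_succ
    intro n
    rw [hBs]
    exact hb _
  have hlt : ∀ i j, i < j → (a (B i)).1 ⊔ (a (B j)).1 = ⊤ := by
    intro i j hij
    refine top_le_iff.1 ((hab (B i)).symm.le.trans ?_)
    refine sup_le_sup le_rfl ?_
    rw [← hBs]
    exact (hmono (Nat.succ_le_of_lt hij)).trans (ha _)
  refine ⟨fun n => (a (B n)).1, fun n => (a (B n)).2, fun i j hij => ?_⟩
  rcases lt_or_gt_of_ne hij with h | h
  · exact hlt i j h
  · rw [sup_comm]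
    exact hlt j i h

theorem stmt_6 {D : Type*} [CommRing D] [IsDomain D] (Γ : Set (Ideal D))
    (hΓ : ∀ J ∈ Γ, J ≠ ⊥ ∧ J ≠ ⊤ ∧ Ideal.FG J)
    (hcov : ∀ I : Ideal D, I ≠ ⊥ → I ≠ ⊤ → I.FG → ∃ J ∈ Γ, I ≤ J) :
    (∀ x : D, x ≠ 0 → ¬ IsUnit x → {M : Ideal D | M.IsMaximal ∧ x ∈ M}.Finite) ↔
    (∀ I : Ideal D, I ≠ ⊥ → I ≠ ⊤ → I.FG →
      (∃ J ∈ Γ, I ≤ J) ∧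
      ∀ S : Set (Ideal D), S ⊆ Γ → (∀ J ∈ S, I ≤ J) →
        (∀ J ∈ S, ∀ K ∈ S, J ≠ K → J + K = ⊤) → S.Finite) := by
  constructor
  · intro h I h0 h1 hfg
    refine ⟨hcov I h0 h1 hfg, fun S hS hIS hc => ?_⟩
    obtain ⟨x, hx, hx0⟩ := Submodule.exists_mem_ne_zero_of_ne_bot h0
    have hfin := h x hx0 (fun hu => h1 (Ideal.eq_top_of_isUnit_mem _ hx hu))
    have hm : ∀ J : S, ∃ M : Ideal D, M.IsMaximal ∧ J.1 ≤ M := fun J =>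
      Ideal.exists_le_maximal _ (hΓ _ (hS J.2)).2.1
    choose m hmm hle using hm
    have := hfin.to_subtype
    have hfinS : Finite S := by
      refine Finite.of_injective
        (fun J : S => (⟨m J, hmm J, hle J (hIS _ J.2 hx)⟩ :
          {M : Ideal D | M.IsMaximal ∧ x ∈ M})) ?_
      intro J K hJK
      by_contra hne
      have e : m J = m K := congrArg Subtype.val hJK
      have ht := hc J.1 J.2 K.1 K.2 (fun e => hne (Subtype.ext e))
      have hle' : J.1 ⊔ K.1 ≤ m K := sup_le (e ▸ hle J) (hle K)
      exact (hmm K).ne_top (top_le_iff.1 (ht.symm.le.trans hle'))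
    exact Set.toFinite S
  · intro h x hx0 hxu
    by_contra hinf
    set X := Ideal.span {x} with hX
    have hX0 : X ≠ ⊥ := by simpa [hX] using hx0
    have hX1 : X ≠ ⊤ := by simpa [hX, Ideal.span_singleton_eq_top] using hxu
    have hXfg : X.FG := Submodule.fg_span_singleton x
    have hS := (h X hX0 hX1 hXfg).2
    have hΓ' : ∀ J ∈ Γ, J ≠ ⊤ := fun J hJ => (hΓ J hJ).2.1
    let T : Set (Ideal D) := {M | M.IsMaximal ∧ ∃ H : Ideal D, H.FG ∧ X ≤ H ∧ H ≤ M ∧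
      ∀ N : Ideal D, N.IsMaximal → H ≤ N → N = M}
    have hT : T.Finite := by
      have hh : ∀ M : T, ∃ H : Ideal D, H.FG ∧ X ≤ H ∧ H ≤ M.1 ∧
        ∀ N : Ideal D, N.IsMaximal → H ≤ N → N = M.1 := fun M => M.2.2
      choose H hH1 hH2 hH3 hH4 using hh
      have : Finite T := aux_finite Γ hΓ' X hX0 hcov hS H
        (fun M => ⟨hH1 M, fun e => M.2.1.ne_top (top_le_iff.1 (e ▸ hH3 M)), hH2 M⟩) (by
          intro M N hMN
          by_contra hne
          obtain ⟨Q, hQ, hle⟩ := Ideal.exists_le_maximal _ hne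
          have e1 := hH4 M Q hQ (le_sup_left.trans hle)
          have e2 := hH4 N Q hQ (le_sup_right.trans hle)
          exact hMN (Subtype.ext (e1.symm.trans e2)))
      exact Set.toFinite T
    obtain ⟨M, ⟨hM, hxM⟩, hMT⟩ := Set.Infinite.exists_notMem_finite hinf hT
    have hy : ∃ y ∈ M, ∀ N ∈ T, y ∉ N := by
      by_contra hcon
      push Not at hcon
      have hsub : (M : Set D) ⊆ ⋃ N ∈ (hT.toFinset : Set (Ideal D)), (N : Set D) := by
        intro y hy
        obtain ⟨N, hN, hyN⟩ := hcon y hy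
        simp only [Set.mem_iUnion]
        exact ⟨N, by simpa using hN, hyN⟩
      obtain ⟨N, hN, hle⟩ := (Ideal.subset_union_prime (f := fun N : Ideal D => N) ⊥ ⊥
        (fun N hN _ _ => by
          have hN' : N ∈ T := by simpa using hN
          exact hN'.1.isPrime)).1 hsub
      have hN' : N ∈ T := by simpa using hN
      exact hMT (hM.eq_of_le hN'.1.ne_top hle ▸ hN')
    obtain ⟨y, hyM, hyT⟩ := hy
    have hXM : X ≤ M := (Ideal.span_singleton_le_iff_mem _).2 hxM
    have hYM : X ⊔ Ideal.span {y} ≤ M :=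
      sup_le hXM ((Ideal.span_singleton_le_iff_mem _).2 hyM)
    obtain ⟨f, hf, hc⟩ := aux_seq (X ⊔ Ideal.span {y})
      (Submodule.FG.sup hXfg (Submodule.fg_span_singleton y))
      (fun e => hM.ne_top (top_le_iff.1 (e ▸ hYM))) (by
        intro J hJ hJ1 hle
        obtain ⟨Q, hQ, hJQ⟩ := Ideal.exists_le_maximal _ hJ1
        by_contra hcon
        push Not at hcon
        have hQT : Q ∈ T := ⟨hQ, J, hJ, le_sup_left.trans hle, hJQ,
          fun N hN hJN => hcon N Q hN hQ hJN hJQ⟩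
        exact hyT Q hQT (hJQ (hle (Ideal.mem_sup_right (Ideal.mem_span_singleton_self y)))))
    have := aux_finite Γ hΓ' X hX0 hcov hS f
      (fun i => ⟨(hf i).1, (hf i).2.1, le_sup_left.trans (hf i).2.2⟩) hc
    exact not_finite ℕ
end

section
/- Let M be a pre-Riesz monoid. A nonempty subset S of M is a basis of M if and only if S is a disjoint set and, for every s ∈ S and every pair of distinct elements x, y of (M ∖ S) ∪ {s}, the set (S ∖ {s}) ∪ {x, y} is not a disjoint set. -/
variable {M : Type*} [AddCommMonoid M] [PartialOrder M]

/-- `h` is homogeneous: `h` is strictly positive and any two strictly positive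
elements below `h` have a common strictly positive lower bound. -/
def Homog (h : M) : Prop :=
  0 < h ∧ ∀ r s : M, 0 < r → r ≤ h → 0 < s → s ≤ h → ∃ t : M, 0 < t ∧ t ≤ r ∧ t ≤ s

/-- `x` and `y` are disjoint: no strictly positive common lower bound. -/
def Disj (x y : M) : Prop := ¬ ∃ r : M, 0 < r ∧ r ≤ x ∧ r ≤ y

/-- A disjoint set: a set of pairwise disjoint strictly positive elements. -/
def DisjSet (S : Set M) : Prop :=
  (∀ x ∈ S, 0 < x) ∧ ∀ x ∈ S, ∀ y ∈ S, x ≠ y → Disj x y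

/-- A basis: a disjoint set, maximal under inclusion among disjoint sets, all of whose
elements are homogeneous. -/
def IsBasisSet (S : Set M) : Prop :=
  DisjSet S ∧ (∀ T : Set M, DisjSet T → S ⊆ T → T = S) ∧ ∀ x ∈ S, Homog x

/-- A pre-Riesz monoid: upper directed, and every finite family of strictly positive
elements either has `0` as a greatest lower bound or admits a strictly positive
common lower bound. -/
def PreRiesz (M : Type*) [AddCommMonoid M] [PartialOrder M] : Prop :=
  (∀ a b : M, ∃ c : M, a ≤ c ∧ b ≤ c) ∧
  ∀ s : Finset M, s.Nonempty → (∀ x ∈ s, 0 < x) →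
    IsGLB (↑s : Set M) (0 : M) ∨ ∃ r : M, 0 < r ∧ ∀ x ∈ s, r ≤ x

theorem stmt_10 {M : Type*} [AddCommMonoid M] [PartialOrder M]
    (hcomp : ∀ a b c : M, a ≤ b → a + c ≤ b + c) (hbot : ∀ x : M, 0 ≤ x)
    (hpR : PreRiesz M) (S : Set M) (hne : S.Nonempty) :
    IsBasisSet S ↔
      DisjSet S ∧ ∀ s ∈ S, ∀ x y : M, x ∈ Sᶜ ∪ {s} → y ∈ Sᶜ ∪ {s} → x ≠ y →
        ¬ DisjSet ((S \ {s}) ∪ {x, y}) := by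
  constructor
  · rintro ⟨hS, hmax, hhom⟩
    refine ⟨hS, ?_⟩
    intro s hs x y hx hy hxy hD
    have key : ∀ z, z ∈ Sᶜ ∪ {s} → z ∈ (S \ {s}) ∪ {x, y} → ∃ r, 0 < r ∧ r ≤ z ∧ r ≤ s := by
      intro z hz hzD
      by_contra hcon
      have hz0 : 0 < z := hD.1 z hzD
      rcases hz with hz | hz
      · have hsz : ∀ a ∈ S, Disj z a := by
          intro a ha
          by_cases has : a = s
          · subst has; exact hcon
          · exact hD.2 z hzD a (Or.inl ⟨ha, has⟩) (fun h => hz (h ▸ ha))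
        have hT : DisjSet (insert z S) := by
          refine ⟨?_, ?_⟩
          · rintro a (rfl | ha)
            · exact hz0
            · exact hS.1 a ha
          · rintro a (rfl | ha) b (rfl | hb) hab
            · exact absurd rfl hab
            · exact hsz b hb
            · rintro ⟨r, h0, h1, h2⟩
              exact hsz a ha ⟨r, h0, h2, h1⟩
            · exact hS.2 a ha b hb hab
        have := hmax _ hT (Set.subset_insert z S)
        exact hz (this ▸ Set.mem_insert z S)
      · have hzs : z = s := hz
        exact hcon ⟨z, hz0, le_rfl, hzs.le⟩
    have hxD : x ∈ (S \ {s}) ∪ {x, y} := by simp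
    have hyD : y ∈ (S \ {s}) ∪ {x, y} := by simp
    obtain ⟨r, hr0, hrx, hrs⟩ := key x hx hxD
    obtain ⟨u, hu0, huy, hus⟩ := key y hy hyD
    obtain ⟨t, ht0, htr, htu⟩ := (hhom s hs).2 r u hr0 hrs hu0 hus
    exact hD.2 x hxD y hyD hxy ⟨t, ht0, htr.trans hrx, htu.trans huy⟩
  · rintro ⟨hS, hcond⟩
    refine ⟨hS, ?_, ?_⟩
    · intro T hT hST
      refine Set.Subset.antisymm ?_ hST
      intro x hx
      by_contra hxS
      obtain ⟨s, hs⟩ := hne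
      refine hcond s hs x s (Or.inl hxS) (Or.inr rfl) (fun h => hxS (h ▸ hs)) ?_
      have hsub : (S \ {s}) ∪ {x, s} ⊆ T := by
        rintro a (ha | rfl | rfl)
        · exact hST ha.1
        · exact hx
        · exact hST hs
      exact ⟨fun a ha => hT.1 a (hsub ha), fun a ha b hb => hT.2 a (hsub ha) b (hsub hb)⟩
    · intro s hs
      refine ⟨hS.1 s hs, ?_⟩
      intro r u hr0 hrs hu0 hus
      by_contra hcon
      have mem : ∀ z, 0 < z → z ≤ s → z ∈ Sᶜ ∪ {s} := by
        intro z hz0 hzs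
        by_cases hz : z ∈ S
        · right
          by_contra hne'
          exact hS.2 z hz s hs hne' ⟨z, hz0, le_rfl, hzs⟩
        · exact Or.inl hz
      have hdis : ∀ z, z ≤ s → ∀ a ∈ S \ {s}, Disj z a := by
        rintro z hzs a ⟨ha, has⟩ ⟨t, h0, h1, h2⟩
        exact hS.2 a ha s hs has ⟨t, h0, h2, h1.trans hzs⟩
      have symm' : ∀ a b : M, Disj a b → Disj b a := by
        rintro a b h ⟨t, h0, h1, h2⟩
        exact h ⟨t, h0, h2, h1⟩
      refine hcond s hs r u (mem r hr0 hrs) (mem u hu0 hus) ?_ ?_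
      · rintro rfl
        exact hcon ⟨r, hr0, le_rfl, le_rfl⟩
      · refine ⟨?_, ?_⟩
        · rintro a (ha | rfl | rfl)
          · exact hS.1 a ha.1
          · exact hr0
          · exact hu0
        · rintro a (ha | rfl | rfl) b (hb | rfl | rfl) hab
          · exact hS.2 a ha.1 b hb.1 hab
          · exact symm' _ _ (hdis _ hrs a ha)
          · exact symm' _ _ (hdis _ hus a ha)
          · exact hdis _ hrs b hb
          · exact absurd rfl hab
          · exact hcon
          · exact hdis _ hus b hb
          · exact symm' _ _ hcon
          · exact absurd rfl hab
end

section
/- Let M be a nontrivial pre-Riesz monoid (M has at least one strictly positive element). Then M has a basis if and only if every strictly positive element of M exceeds (is ≥) at least one homogeneous element. Moreover, when this condition holds, every set of pairwise disjoint homogeneous elements that is maximal under inclusion among such sets is a basis of M. -/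
variable {M : Type*} [AddCommMonoid M] [PartialOrder M]

theorem stmt_11 {M : Type*} [AddCommMonoid M] [PartialOrder M]
    (hcomp : ∀ a b c : M, a ≤ b → a + c ≤ b + c) (hbot : ∀ x : M, 0 ≤ x)
    (hnt : ∃ x : M, 0 < x) (hpR : PreRiesz M) :
    ((∃ S : Set M, IsBasisSet S) ↔ ∀ x : M, 0 < x → ∃ h : M, Homog h ∧ h ≤ x) ∧
    ((∀ x : M, 0 < x → ∃ h : M, Homog h ∧ h ≤ x) →
      ∀ S : Set M, (∀ x ∈ S, Homog x) → (∀ x ∈ S, ∀ y ∈ S, x ≠ y → Disj x y) →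
        (∀ T : Set M, (∀ x ∈ T, Homog x) → (∀ x ∈ T, ∀ y ∈ T, x ≠ y → Disj x y) →
          S ⊆ T → T = S) →
        IsBasisSet S) := by
  have symm : ∀ x y : M, Disj x y → Disj y x := by
    rintro x y h ⟨r, h0, h1, h2⟩
    exact h ⟨r, h0, h2, h1⟩
  have ins : ∀ (S : Set M) (a : M), (∀ x ∈ S, ∀ y ∈ S, x ≠ y → Disj x y) →
      (∀ s ∈ S, Disj a s) → ∀ x ∈ insert a S, ∀ y ∈ insert a S, x ≠ y → Disj x y := by
    rintro S a hS ha x (rfl | hx) y (rfl | hy) hne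
    · exact absurd rfl hne
    · exact ha y hy
    · exact symm _ _ (ha x hx)
    · exact hS x hx y hy hne
  have key : (∀ x : M, 0 < x → ∃ h : M, Homog h ∧ h ≤ x) →
      ∀ S : Set M, (∀ x ∈ S, Homog x) → (∀ x ∈ S, ∀ y ∈ S, x ≠ y → Disj x y) →
        (∀ T : Set M, (∀ x ∈ T, Homog x) → (∀ x ∈ T, ∀ y ∈ T, x ≠ y → Disj x y) →
          S ⊆ T → T = S) →
        IsBasisSet S := by
    intro H S hS hd hmax
    refine ⟨⟨fun x hx => (hS x hx).1, hd⟩, ?_, hS⟩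
    intro T hT hST
    refine Set.Subset.antisymm ?_ hST
    intro y hy
    by_contra hyS
    obtain ⟨h, hh, hhy⟩ := H y (hT.1 y hy)
    have hdis : ∀ s ∈ S, Disj h s := by
      rintro s hs ⟨r, h0, h1, h2⟩
      exact hT.2 y hy s (hST hs) (fun e => hyS (e ▸ hs)) ⟨r, h0, h1.trans hhy, h2⟩
    have e := hmax (insert h S)
      (by rintro x (rfl | hx); exacts [hh, hS x hx]) (ins S h hd hdis) (Set.subset_insert _ _)
    have hS' : h ∈ S := e ▸ Set.mem_insert h S
    exact hdis h hS' ⟨h, hh.1, le_rfl, le_rfl⟩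
  refine ⟨⟨?_, ?_⟩, key⟩
  · rintro ⟨S, hS, hmax, hhom⟩ x hx
    by_cases hd : ∀ s ∈ S, Disj x s
    · have e := hmax (insert x S)
        ⟨by rintro z (rfl | hz); exacts [hx, hS.1 z hz], ins S x hS.2 hd⟩ (Set.subset_insert _ _)
      have hxS : x ∈ S := e ▸ Set.mem_insert x S
      exact ⟨x, hhom x hxS, le_rfl⟩
    · unfold Disj at hd
      push Not at hd
      obtain ⟨s, hs, r, h0, h1, h2⟩ := hd
      exact ⟨r, ⟨h0, fun a b a0 a1 b0 b1 =>
        (hhom s hs).2 a b a0 (a1.trans h2) b0 (b1.trans h2)⟩, h1⟩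
  · intro H
    obtain ⟨S, hS⟩ := zorn_subset
      {S : Set M | (∀ x ∈ S, Homog x) ∧ ∀ x ∈ S, ∀ y ∈ S, x ≠ y → Disj x y} (by
        intro c hc hch
        refine ⟨⋃₀ c, ⟨?_, ?_⟩, fun s hs => Set.subset_sUnion_of_mem hs⟩
        · rintro x ⟨A, hA, hx⟩
          exact (hc hA).1 x hx
        · rintro x ⟨A, hA, hx⟩ y ⟨B, hB, hy⟩ hne
          rcases hch.total hA hB with h | h
          · exact (hc hB).2 x (h hx) y hy hne
          · exact (hc hA).2 x hx y (h hy) hne)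
    exact ⟨S, key H S hS.prop.1 hS.prop.2 fun T h1 h2 h3 =>
      Set.Subset.antisymm (hS.le_of_ge ⟨h1, h2⟩ h3) h3⟩
end

section
/- Let M be a nontrivial pre-Riesz monoid satisfying Conrad's F-condition: for every strictly positive x ∈ M, every set of pairwise disjoint strictly positive elements all ≤ x is finite. Then M has a basis. -/
variable {M : Type*} [AddCommMonoid M] [PartialOrder M]

/-- Under the F-condition, every strictly positive element dominates a homogeneous one. -/
theorem exists_homog_le {M : Type*} [AddCommMonoid M] [PartialOrder M]
    (hF : ∀ x : M, 0 < x → ∀ S : Set M, (∀ y ∈ S, 0 < y ∧ y ≤ x) →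
      (∀ y ∈ S, ∀ z ∈ S, y ≠ z → Disj y z) → S.Finite)
    (x : M) (hx : 0 < x) : ∃ h : M, Homog h ∧ h ≤ x := by
  by_contra hno
  have key : ∀ y : {y : M // 0 < y ∧ y ≤ x}, ∃ r : M, ∃ s : {y : M // 0 < y ∧ y ≤ x},
      0 < r ∧ r ≤ y.1 ∧ s.1 ≤ y.1 ∧ Disj r s.1 := by
    rintro ⟨y, hy, hyx⟩
    by_contra hc
    refine hno ⟨y, ⟨hy, fun r s hr hry hs hsy => ?_⟩, hyx⟩
    by_contra hd
    exact hc ⟨r, ⟨s, hs, hsy.trans hyx⟩, hr, hry, hsy, hd⟩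
  choose r s hr hry hsy hd using key
  let f : ℕ → {y : M // 0 < y ∧ y ≤ x} := fun n => Nat.rec ⟨x, hx, le_rfl⟩ (fun _ y => s y) n
  have hfs : ∀ n, f (n + 1) = s (f n) := fun n => rfl
  have hanti : Antitone (fun n => (f n).1) := antitone_nat_of_succ_le fun n => by
    rw [hfs]
    exact hsy _
  have hdis : ∀ m n, m < n → Disj (r (f m)) (r (f n)) := by
    rintro m n hmn ⟨t, ht, h1, h2⟩
    refine hd (f m) ⟨t, ht, h1, h2.trans ((hry _).trans ?_)⟩
    have := hanti (Nat.succ_le_of_lt hmn)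
    exact this
  have hsymm : ∀ a b : M, Disj a b → Disj b a :=
    fun a b h ⟨t, h0, h1, h2⟩ => h ⟨t, h0, h2, h1⟩
  have hinj : Function.Injective (fun n => r (f n)) := by
    intro m n hmn
    by_contra hne
    have hmn' : r (f m) = r (f n) := hmn
    rcases lt_or_gt_of_ne hne with h | h
    · exact hdis m n h ⟨r (f m), hr _, le_rfl, hmn'.le⟩
    · exact hdis n m h ⟨r (f m), hr _, hmn'.le, le_rfl⟩
  refine Set.infinite_range_of_injective hinj (hF x hx _ ?_ ?_)
  · rintro _ ⟨n, rfl⟩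
    exact ⟨hr _, (hry _).trans (f n).2.2⟩
  · rintro _ ⟨m, rfl⟩ _ ⟨n, rfl⟩ hne
    have hmn : m ≠ n := fun h => hne (by rw [h])
    rcases lt_or_gt_of_ne hmn with h | h
    · exact hdis m n h
    · exact hsymm _ _ (hdis n m h)

theorem stmt_12 {M : Type*} [AddCommMonoid M] [PartialOrder M]
    (hcomp : ∀ a b c : M, a ≤ b → a + c ≤ b + c) (hbot : ∀ x : M, 0 ≤ x)
    (hnt : ∃ x : M, 0 < x) (hpR : PreRiesz M)
    (hF : ∀ x : M, 0 < x → ∀ S : Set M, (∀ y ∈ S, 0 < y ∧ y ≤ x) →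
      (∀ y ∈ S, ∀ z ∈ S, y ≠ z → Disj y z) → S.Finite) :
    ∃ S : Set M, IsBasisSet S := by
  obtain ⟨S, hS⟩ := zorn_subset {S : Set M | DisjSet S ∧ ∀ x ∈ S, Homog x} (by
    intro c hc hchain
    refine ⟨⋃₀ c, ⟨⟨?_, ?_⟩, ?_⟩, fun s hs => Set.subset_sUnion_of_mem hs⟩
    · rintro x ⟨A, hA, hx⟩
      exact (hc hA).1.1 x hx
    · rintro x ⟨A, hA, hx⟩ y ⟨B, hB, hy⟩ hne
      rcases hchain.total hA hB with h | h
      · exact (hc hB).1.2 x (h hx) y hy hne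
      · exact (hc hA).1.2 x hx y (h hy) hne
    · rintro x ⟨A, hA, hx⟩
      exact (hc hA).2 x hx)
  refine ⟨S, hS.prop.1, fun T hT hST => ?_, hS.prop.2⟩
  refine Set.Subset.antisymm (fun t ht => ?_) hST
  by_contra htS
  obtain ⟨h, hh, hht⟩ := exists_homog_le hF t (hT.1 t ht)
  have hdisj : ∀ y ∈ S, Disj h y := by
    rintro y hy ⟨q, hq, h1, h2⟩
    exact hT.2 t ht y (hST hy) (fun e => htS (e ▸ hy)) ⟨q, hq, h1.trans hht, h2⟩
  have hmem : insert h S ∈ {S : Set M | DisjSet S ∧ ∀ x ∈ S, Homog x} := by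
    refine ⟨⟨?_, ?_⟩, ?_⟩
    · rintro x (rfl | hx)
      · exact hh.1
      · exact hS.prop.1.1 x hx
    · rintro x (rfl | hx) y (rfl | hy) hne
      · exact absurd rfl hne
      · exact hdisj y hy
      · rintro ⟨q, hq, h1, h2⟩
        exact hdisj x hx ⟨q, hq, h2, h1⟩
      · exact hS.prop.1.2 x hx y hy hne
    · rintro x (rfl | hx)
      · exact hh
      · exact hS.prop.2 x hx
  have hhS : h ∈ S := hS.le_of_ge hmem (Set.subset_insert h S) (Set.mem_insert h S)
  exact hdisj h hhS ⟨h, hh.1, le_rfl, le_rfl⟩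
end

section
/- Let M be a nontrivial pre-Riesz monoid. The following are equivalent: (i) M satisfies Conrad's F-condition (for every strictly positive x, every set of pairwise disjoint strictly positive elements all ≤ x is finite); (ii) every strictly positive element of M exceeds at least one homogeneous element, and for every strictly positive x every set of pairwise disjoint homogeneous elements all ≤ x is finite; (iii) there is a subset Γ of strictly positive elements of M such that every strictly positive element of M exceeds at least one member of Γ and, for every strictly positive x, every set of pairwise disjoint members of Γ all ≤ x is finite. -/
variable {M : Type*} [AddCommMonoid M] [PartialOrder M]

theorem stmt_13_c_a {M : Type*} [AddCommMonoid M] [PartialOrder M]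
    (Γ : Set M) (h0 : ∀ g ∈ Γ, 0 < g) (h1 : ∀ x : M, 0 < x → ∃ g ∈ Γ, g ≤ x)
    (h2 : ∀ x : M, 0 < x → ∀ S : Set M, S ⊆ Γ → (∀ y ∈ S, y ≤ x) →
          (∀ y ∈ S, ∀ z ∈ S, y ≠ z → Disj y z) → S.Finite) :
    ∀ x : M, 0 < x → ∀ S : Set M, (∀ y ∈ S, 0 < y ∧ y ≤ x) →
        (∀ y ∈ S, ∀ z ∈ S, y ≠ z → Disj y z) → S.Finite := by
  intro x hx S hS hd
  choose! g hg hgl using h1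
  have hfin : (g '' S).Finite := by
    apply h2 x hx
    · rintro _ ⟨y, hy, rfl⟩
      exact hg y (hS y hy).1
    · rintro _ ⟨y, hy, rfl⟩
      exact (hgl y (hS y hy).1).trans (hS y hy).2
    · rintro _ ⟨y, hy, rfl⟩ _ ⟨z, hz, rfl⟩ hne ⟨r, hr, hry, hrz⟩
      exact hd y hy z hz (fun e => hne (by rw [e]))
        ⟨r, hr, hry.trans (hgl y (hS y hy).1), hrz.trans (hgl z (hS z hz).1)⟩
  refine hfin.of_finite_image ?_
  intro y hy z hz e
  by_contra hne
  exact hd y hy z hz hne ⟨g y, h0 _ (hg y (hS y hy).1), hgl y (hS y hy).1,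
    e.le.trans (hgl z (hS z hz).1)⟩

theorem stmt_13_a_b {M : Type*} [AddCommMonoid M] [PartialOrder M]
    (h : ∀ x : M, 0 < x → ∀ S : Set M, (∀ y ∈ S, 0 < y ∧ y ≤ x) →
        (∀ y ∈ S, ∀ z ∈ S, y ≠ z → Disj y z) → S.Finite) :
    ∀ x : M, 0 < x → ∃ h : M, Homog h ∧ h ≤ x := by
  intro x hx
  by_contra hno
  have key : ∀ y : M, 0 < y ∧ y ≤ x →
      ∃ r s : M, 0 < r ∧ r ≤ y ∧ 0 < s ∧ s ≤ y ∧ Disj r s := by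
    rintro y ⟨hy, hyx⟩
    by_contra hc
    refine hno ⟨y, ⟨hy, fun r s hr hry hs hsy => ?_⟩, hyx⟩
    by_contra ht
    exact hc ⟨r, s, hr, hry, hs, hsy, ht⟩
  choose! r s hr hry hs hsy hd using key
  let u : ℕ → M := fun n => s^[n] x
  have hu : ∀ n, u (n + 1) = s (u n) := fun n => Function.iterate_succ_apply' s n x
  have hub : ∀ n, 0 < u n ∧ u n ≤ x := by
    intro n
    induction n with
    | zero => exact ⟨hx, le_refl x⟩
    | succ k ih =>
      rw [hu]
      exact ⟨hs _ ih, (hsy _ ih).trans ih.2⟩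
  have hanti : Antitone u := antitone_nat_of_succ_le fun n => by
    rw [hu]
    exact hsy _ (hub n)
  have hlt : ∀ m n, m < n → Disj (r (u m)) (r (u n)) := by
    rintro m n hmn ⟨t, ht, htm, htn⟩
    refine hd _ (hub m) ⟨t, ht, htm, ?_⟩
    rw [← hu]
    exact htn.trans ((hry _ (hub n)).trans (hanti hmn))
  have hne : ∀ m n, m ≠ n → Disj (r (u m)) (r (u n)) := by
    intro m n hmn
    rcases lt_or_gt_of_ne hmn with hl | hl
    · exact hlt m n hl
    · rintro ⟨t, ht, htm, htn⟩
      exact hlt n m hl ⟨t, ht, htn, htm⟩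
  have hinj : Function.Injective fun n => r (u n) := by
    intro m n e
    by_contra hmn
    exact hne m n hmn ⟨r (u m), hr _ (hub m), le_refl _, le_of_eq e⟩
  refine Set.infinite_range_of_injective hinj (h x hx _ ?_ ?_)
  · rintro _ ⟨n, rfl⟩
    exact ⟨hr _ (hub n), (hry _ (hub n)).trans (hub n).2⟩
  · rintro _ ⟨m, rfl⟩ _ ⟨n, rfl⟩ hmn
    exact hne m n (fun e => hmn (by rw [e]))

theorem stmt_13 {M : Type*} [AddCommMonoid M] [PartialOrder M]
    (hcomp : ∀ a b c : M, a ≤ b → a + c ≤ b + c) (hbot : ∀ x : M, 0 ≤ x)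
    (hnt : ∃ x : M, 0 < x) (hpR : PreRiesz M) :
    ((∀ x : M, 0 < x → ∀ S : Set M, (∀ y ∈ S, 0 < y ∧ y ≤ x) →
        (∀ y ∈ S, ∀ z ∈ S, y ≠ z → Disj y z) → S.Finite) ↔
      ((∀ x : M, 0 < x → ∃ h : M, Homog h ∧ h ≤ x) ∧
        ∀ x : M, 0 < x → ∀ S : Set M, (∀ y ∈ S, Homog y ∧ y ≤ x) →
          (∀ y ∈ S, ∀ z ∈ S, y ≠ z → Disj y z) → S.Finite)) ∧
    (((∀ x : M, 0 < x → ∃ h : M, Homog h ∧ h ≤ x) ∧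
        ∀ x : M, 0 < x → ∀ S : Set M, (∀ y ∈ S, Homog y ∧ y ≤ x) →
          (∀ y ∈ S, ∀ z ∈ S, y ≠ z → Disj y z) → S.Finite) ↔
      (∃ Γ : Set M, (∀ g ∈ Γ, 0 < g) ∧ (∀ x : M, 0 < x → ∃ g ∈ Γ, g ≤ x) ∧
        ∀ x : M, 0 < x → ∀ S : Set M, S ⊆ Γ → (∀ y ∈ S, y ≤ x) →
          (∀ y ∈ S, ∀ z ∈ S, y ≠ z → Disj y z) → S.Finite)) := by
  have h31 := stmt_13_c_a (M := M)
  have h12 := stmt_13_a_b (M := M)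
  refine ⟨⟨fun h => ⟨fun x hx => h12 h x hx, fun x hx S hS hd =>
      h x hx S (fun y hy => ⟨(hS y hy).1.1, (hS y hy).2⟩) hd⟩, ?_⟩, ?_, ?_⟩
  · rintro ⟨h1, h2⟩
    exact h31 {h | Homog h} (fun g hg => hg.1) h1
      (fun x hx S hS hl hd => h2 x hx S (fun y hy => ⟨hS hy, hl y hy⟩) hd)
  · rintro ⟨h1, h2⟩
    exact ⟨{h | Homog h}, fun g hg => hg.1, h1,
      fun x hx S hS hl hd => h2 x hx S (fun y hy => ⟨hS hy, hl y hy⟩) hd⟩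
  · rintro ⟨Γ, h0, h1, h2⟩
    have h := h31 Γ h0 h1 h2
    exact ⟨fun x hx => h12 h x hx, fun x hx S hS hd =>
      h x hx S (fun y hy => ⟨(hS y hy).1.1, (hS y hy).2⟩) hd⟩
end

section
/- Let M be a commutative cancellative monoid partially ordered by divisibility (a ≤ b if and only if a + c = b for some c ∈ M). The following are equivalent: (1) every element of M is primal; (2) (2,2)-interpolation: for all a, b, x, y ∈ M with a ≤ x, a ≤ y, b ≤ x, b ≤ y, there exists z with a ≤ z, b ≤ z, z ≤ x, z ≤ y; (3) for all a, b, x₁, …, xₙ ∈ M with a and b below every xᵢ there exists z with a ≤ z, b ≤ z and z ≤ xᵢ for all i; (4) (n,m)-interpolation: for all a₁, …, aₙ, b₁, …, b_m ∈ M with aᵢ ≤ b_j for all i, j, there exists d with aᵢ ≤ d for all i and d ≤ b_j for all j. -/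
theorem stmt_14 {M : Type*} [AddCommMonoid M] [PartialOrder M]
    (hdvd : ∀ a b : M, a ≤ b ↔ ∃ c : M, a + c = b)
    (hcancel : ∀ a b c : M, a + b = a + c → b = c) :
    -- (1) every element is primal
    ((∀ x y₁ y₂ : M, x ≤ y₁ + y₂ →
        ∃ x₁ x₂ : M, x = x₁ + x₂ ∧ x₁ ≤ y₁ ∧ x₂ ≤ y₂) ↔
      -- (2) (2,2)-interpolation
      (∀ a b x y : M, a ≤ x → a ≤ y → b ≤ x → b ≤ y →
        ∃ z : M, a ≤ z ∧ b ≤ z ∧ z ≤ x ∧ z ≤ y)) ∧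
    ((∀ a b x y : M, a ≤ x → a ≤ y → b ≤ x → b ≤ y →
        ∃ z : M, a ≤ z ∧ b ≤ z ∧ z ≤ x ∧ z ≤ y) ↔
      -- (3) (2,n)-interpolation
      (∀ (n : ℕ) (a b : M) (x : Fin n → M), (∀ i, a ≤ x i) → (∀ i, b ≤ x i) →
        ∃ z : M, a ≤ z ∧ b ≤ z ∧ ∀ i, z ≤ x i)) ∧
    ((∀ (n : ℕ) (a b : M) (x : Fin n → M), (∀ i, a ≤ x i) → (∀ i, b ≤ x i) →
        ∃ z : M, a ≤ z ∧ b ≤ z ∧ ∀ i, z ≤ x i) ↔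
      -- (4) (n,m)-interpolation
      (∀ (n m : ℕ) (a : Fin n → M) (b : Fin m → M), (∀ i j, a i ≤ b j) →
        ∃ d : M, (∀ i, a i ≤ d) ∧ ∀ j, d ≤ b j)) := by
  have hle : ∀ a c : M, a ≤ a + c := fun a c => (hdvd _ _).2 ⟨c, rfl⟩
  have hle_right : ∀ a c : M, a ≤ c + a := fun a c => (hdvd _ _).2 ⟨c, add_comm _ _⟩
  have h0 : ∀ a : M, 0 ≤ a := fun a => (hdvd _ _).2 ⟨a, zero_add a⟩
  have hadd : ∀ a b c : M, b ≤ c → a + b ≤ a + c := by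
    intro a b c h
    obtain ⟨d, rfl⟩ := (hdvd _ _).1 h
    rw [← add_assoc]
    exact hle _ _
  have hcan : ∀ a b c : M, a + b ≤ a + c → b ≤ c := by
    intro a b c h
    obtain ⟨d, hd⟩ := (hdvd _ _).1 h
    rw [add_assoc] at hd
    exact (hdvd _ _).2 ⟨d, hcancel _ _ _ hd⟩
  refine ⟨⟨?_, ?_⟩, ⟨?_, ?_⟩, ⟨?_, ?_⟩⟩
  · intro H a b x y hax hay hbx hby
    obtain ⟨p, rfl⟩ := (hdvd _ _).1 hax
    obtain ⟨r, rfl⟩ := (hdvd _ _).1 hay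
    obtain ⟨q, hq⟩ := (hdvd _ _).1 hbx
    obtain ⟨a₁, a₂, rfl, h1, h2⟩ := H a b q (hq ▸ hax)
    obtain ⟨bb, rfl⟩ := (hdvd _ _).1 h1
    obtain ⟨qq, rfl⟩ := (hdvd _ _).1 h2
    have hp : bb + qq = p := by
      apply hcancel (a₁ + a₂)
      rw [← hq]
      abel
    have h3 : bb ≤ a₂ + r := by
      apply hcan a₁
      rw [← add_assoc]
      exact hby
    obtain ⟨u, v, rfl, hu, hv⟩ := H _ _ _ h3
    refine ⟨a₁ + a₂ + v, hle _ _, ?_, ?_, hadd _ _ _ hv⟩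
    · rw [add_assoc]
      apply hadd
      rw [add_comm u, add_comm a₂]
      exact hadd _ _ _ hu
    · apply hadd
      rw [← hp]
      exact (hle_right v u).trans (hle _ _)
  · intro H x y₁ y₂ h
    obtain ⟨z, hxz, hyz, hz1, hz2⟩ := H x y₁ (y₁ + x) (y₁ + y₂) (hle_right _ _) h (hle _ _) (hle _ _)
    obtain ⟨x₂, rfl⟩ := (hdvd _ _).1 hyz
    obtain ⟨x₁, rfl⟩ := (hdvd _ _).1 (hcan _ _ _ hz1)
    refine ⟨x₁, x₂, add_comm _ _, ?_, hcan _ _ _ hz2⟩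
    apply hcan x₂
    rw [add_comm x₂ y₁]
    exact hxz
  · intro H n
    induction n with
    | zero => exact fun a b x _ _ => ⟨a + b, hle _ _, hle_right _ _, fun i => i.elim0⟩
    | succ n ih =>
      intro a b x ha hb
      obtain ⟨w, h1, h2, h3⟩ := ih a b (fun i => x i.succ) (fun i => ha _) (fun i => hb _)
      obtain ⟨z, h4, h5, h6, h7⟩ := H a b w (x 0) h1 (ha 0) h2 (hb 0)
      exact ⟨z, h4, h5, Fin.cases h7 (fun i => h6.trans (h3 i))⟩
  · intro H a b x y h1 h2 h3 h4
    obtain ⟨z, h5, h6, h7⟩ := H 2 a b ![x, y] (by simp [Fin.forall_fin_two, h1, h2])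
      (by simp [Fin.forall_fin_two, h3, h4])
    exact ⟨z, h5, h6, h7 0, h7 1⟩
  · intro H n m a b
    induction n with
    | zero => exact fun _ => ⟨0, fun i => i.elim0, fun j => h0 _⟩
    | succ n ih =>
      intro h
      obtain ⟨w, h1, h2⟩ := ih (fun i => a i.succ) (fun i j => h _ _)
      obtain ⟨z, h3, h4, h5⟩ := H m (a 0) w b (h 0) h2
      exact ⟨z, Fin.cases h3 (fun i => (h1 i).trans h4), h5⟩
  · intro H n a b x ha hb
    obtain ⟨z, h1, h2⟩ := H 2 n ![a, b] x (by simp [Fin.forall_fin_two, ha, hb])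
    exact ⟨z, h1 0, h1 1, h2⟩
end

section
/- Let G be a partially ordered abelian group (the partial order is translation invariant) in which every nonnegative element is primal: for all x, a, b ∈ G with 0 ≤ x, 0 ≤ a, 0 ≤ b and x ≤ a + b, there exist u, v ∈ G with 0 ≤ u ≤ a, 0 ≤ v ≤ b and x = u + v. Then G satisfies the Riesz interpolation property: for all p, q, r, s ∈ G with p ≤ r, p ≤ s, q ≤ r, q ≤ s, there exists z ∈ G with p ≤ z, q ≤ z, z ≤ r and z ≤ s. In particular, if G is directed, then G is a Riesz group. -/
theorem stmt_16 {G : Type*} [AddCommGroup G] [PartialOrder G]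
    [CovariantClass G G (· + ·) (· ≤ ·)]
    (hprimal : ∀ x a b : G, 0 ≤ x → 0 ≤ a → 0 ≤ b → x ≤ a + b →
      ∃ u v : G, 0 ≤ u ∧ u ≤ a ∧ 0 ≤ v ∧ v ≤ b ∧ x = u + v) :
    ∀ p q r s : G, p ≤ r → p ≤ s → q ≤ r → q ≤ s →
      ∃ z : G, p ≤ z ∧ q ≤ z ∧ z ≤ r ∧ z ≤ s := by
  intro p q r s hpr hps hqr hqs
  have hle : ∀ {a b : G}, a ≤ b ↔ 0 ≤ b - a := by
    intro a b
    exact (sub_nonneg).symm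
  obtain ⟨u, v, hu, hus, hv, hvb, h⟩ := hprimal (r - p) (s - p) (r - q)
    (hle.1 hpr) (hle.1 hps) (hle.1 hqr) (by
      rw [hle] at hqs ⊢
      convert hqs using 1
      abel)
  have hr : r = u + v + p := by rw [← h]; abel
  subst hr
  refine ⟨p + u, ?_, ?_, ?_, ?_⟩
  · rw [hle]; convert hu using 1; abel
  · rw [hle] at hvb ⊢; convert hvb using 1; abel
  · rw [hle]; convert hv using 1; abel
  · rw [hle] at hus ⊢; convert hus using 1; abel
end
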